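/- Let (A,Λ) be an associative form ring with 1, n ≥ 3, and let (I,Γ), (J,Δ) be form ideals of (A,Λ). Suppose 1 ≤ i ≤ n, a ∈ Γ, b ∈ Δ and r ∈ Λ. Then [T_{−i,i}(a), Z_{−i,i}(b,r)] ∈ [FU(2n,I,Γ), FU(2n,J,Δ)], where Z_{−i,i}(b,r) = T_{i,−i}(r')·T_{−i,i}(b)·T_{i,−i}(−r') with r' the element of λ^{−1}Λ corresponding to r (i.e. Z_{−i,i}(b,r) is the conjugate of T_{−i,i}(b) by the long root transvection at position (i,−i) with parameter taken from λ^{−(ε(i)+1)/2}Λ determined by r). -/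

import Mathlib

open Matrix
open scoped commutatorElement

/-- Bak's form ring data on a ring `A`: an involution `bar`, a central symmetry
`λ` with `λ λ̄ = 1`, and a form parameter `Λ`. -/
structure FormRingData (A : Type*) [Ring A] where
  bar : A →+ A
  bar_mul : ∀ a b : A, bar (a * b) = bar b * bar a
  bar_bar : ∀ a : A, bar (bar a) = a
  lam : A
  lam_comm : ∀ a : A, lam * a = a * lam
  lam_bar : lam * bar lam = 1
  Lambda : AddSubgroup A
  lambdaMin_mem : ∀ c : A, c - lam * bar c ∈ Lambda
  lambdaMax_mem : ∀ x ∈ Lambda, x = -(lam * bar x)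
  lambda_conj : ∀ (c : A), ∀ x ∈ Lambda, c * x * bar c ∈ Lambda

namespace FormRingData

variable {A : Type*} [Ring A]

/-- Integral powers of the symmetry `λ`; negative powers use `λ̄ = λ⁻¹`. -/
def lpow (D : FormRingData A) (k : ℤ) : A :=
  if 0 ≤ k then D.lam ^ k.toNat else (D.bar D.lam) ^ (-k).toNat

end FormRingData

/-- The index set `Ω = {1,…,n,−n,…,−1}`, coded as `Fin n × Bool`
(second component `true` = positive index). -/
abbrev Idx (n : ℕ) := Fin n × Bool

namespace Idx

/-- The involution `i ↦ −i` on indices. -/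
def neg {n : ℕ} (i : Idx n) : Idx n := (i.1, !i.2)

/-- The sign `ε(i) ∈ {±1}`. -/
def eps {n : ℕ} (i : Idx n) : ℤ := if i.2 then 1 else -1

theorem neg_ne {n : ℕ} (i : Idx n) : neg i ≠ i := by
  simp [neg, Prod.ext_iff]

theorem neg_injective {n : ℕ} : Function.Injective (neg (n := n)) := by
  intro i j h
  simp only [neg, Prod.mk.injEq] at h
  refine Prod.ext h.1 ?_
  have h2 := h.2
  cases hi : i.2 <;> cases hj : j.2 <;> simp_all

theorem neg_neg {n : ℕ} (i : Idx n) : neg (neg i) = i := by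
  simp [neg]

end Idx

/-- `GL(2n, A)`, realised as the units of the `Ω × Ω` matrix ring over `A`. -/
abbrev GLn (A : Type*) [Ring A] (n : ℕ) := (Matrix (Idx n) (Idx n) A)ˣ

section aux

theorem one_add_mul_one_sub {R : Type*} [Ring R] {X : R} (h : X * X = 0) :
    (1 + X) * (1 - X) = 1 := by
  have hh : (1 + X) * (1 - X) = 1 - X * X := by noncomm_ring
  rw [hh, h, sub_zero]

theorem one_sub_mul_one_add {R : Type*} [Ring R] {X : R} (h : X * X = 0) :
    (1 - X) * (1 + X) = 1 := by
  have hh : (1 - X) * (1 + X) = 1 - X * X := by noncomm_ring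
  rw [hh, h, sub_zero]

theorem stdBasisMatrix_neg' {A : Type*} [Ring A] {n : ℕ} (i j : Idx n) (c : A) :
    single i j (-c) = -single i j c := by
  refine eq_neg_of_add_eq_zero_left ?_
  rw [← Matrix.single_add]
  simp

end aux

namespace FormRingData

variable {A : Type*} [Ring A] {n : ℕ}

/-- The off-diagonal part of a short root element. -/
def Xmat (D : FormRingData A) (i j : Idx n) (c : A) : Matrix (Idx n) (Idx n) A :=
  single i j c -
    single (Idx.neg j) (Idx.neg i) (D.lpow ((Idx.eps j - Idx.eps i) / 2) * D.bar c)

theorem Xmat_mul (D : FormRingData A) {i j : Idx n} (hij : i ≠ j) (c c' : A) :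
    D.Xmat i j c * D.Xmat i j c' = 0 := by
  unfold Xmat
  rw [sub_mul, mul_sub, mul_sub,
    Matrix.single_mul_single_of_ne _ _ _ _ (Ne.symm hij),
    Matrix.single_mul_single_of_ne _ _ _ _ (Ne.symm (Idx.neg_ne j)),
    Matrix.single_mul_single_of_ne _ _ _ _ (Idx.neg_ne i),
    Matrix.single_mul_single_of_ne _ _ _ _ (fun h => hij (Idx.neg_injective h))]
  simp

theorem Xmat_neg (D : FormRingData A) (i j : Idx n) (c : A) :
    D.Xmat i j (-c) = -D.Xmat i j c := by
  unfold Xmat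
  rw [map_neg, mul_neg, stdBasisMatrix_neg', stdBasisMatrix_neg']
  abel

/-- The elementary short root unipotent `T_{ij}(c)`, for `i ≠ ±j`
(with junk value `1` when `i = j`). -/
def TS (D : FormRingData A) (i j : Idx n) (c : A) : GLn A n :=
  if h : i = j then 1 else
    { val := 1 + D.Xmat i j c
      inv := 1 + D.Xmat i j (-c)
      val_inv := by
        rw [D.Xmat_neg, ← sub_eq_add_neg]
        exact one_add_mul_one_sub (D.Xmat_mul h c c)
      inv_val := by
        rw [D.Xmat_neg, ← sub_eq_add_neg]
        exact one_sub_mul_one_add (D.Xmat_mul h c c) }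

/-- The elementary long root unipotent `T_{i,−i}(c)`. -/
def TL (D : FormRingData A) (i : Idx n) (c : A) : GLn A n where
  val := 1 + single i (Idx.neg i) c
  inv := 1 + single i (Idx.neg i) (-c)
  val_inv := by
    rw [stdBasisMatrix_neg', ← sub_eq_add_neg]
    exact one_add_mul_one_sub (Matrix.single_mul_single_of_ne _ _ _ _ (Idx.neg_ne i) _)
  inv_val := by
    rw [stdBasisMatrix_neg', ← sub_eq_add_neg]
    exact one_sub_mul_one_add (Matrix.single_mul_single_of_ne _ _ _ _ (Idx.neg_ne i) _)

/-- The elementary unitary transvection `T_{ij}(c)` (long or short root type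
according to whether `j = −i`). -/
def T (D : FormRingData A) (i j : Idx n) (c : A) : GLn A n :=
  if j = Idx.neg i then D.TL i c else D.TS i j c

/-- The elementary commutator `Y_{ij}(a,b) = [T_{ij}(a), T_{ji}(b)]`. -/
def Y (D : FormRingData A) (i j : Idx n) (a b : A) : GLn A n :=
  ⁅D.T i j a, D.T j i b⁆

/-- The elementary conjugate `Z_{ij}(a,c) = T_{ji}(c) T_{ij}(a) T_{ji}(−c)`. -/
def Z (D : FormRingData A) (i j : Idx n) (a c : A) : GLn A n :=
  D.T j i c * D.T i j a * D.T j i (-c)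

/-- The set of elementary unitary transvections of level `(I,Γ)`. -/
def transvGen (D : FormRingData A) (n : ℕ) (I Γ : AddSubgroup A) : Set (GLn A n) :=
  {x | ∃ i j : Idx n, i ≠ j ∧ i ≠ Idx.neg j ∧ ∃ c ∈ I, x = D.TS i j c} ∪
    {x | ∃ i : Idx n, ∃ g ∈ Γ, x = D.TL i (D.lpow (-(Idx.eps i + 1) / 2) * g)}

/-- The unrelative elementary subgroup `FU(2n, I, Γ)`. -/
def FU (D : FormRingData A) (n : ℕ) (I Γ : AddSubgroup A) : Subgroup (GLn A n) :=
  Subgroup.closure (D.transvGen n I Γ)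

/-- The absolute elementary unitary group `EU(2n, A, Λ)`. -/
def EUmax (D : FormRingData A) (n : ℕ) : Subgroup (GLn A n) :=
  D.FU n ⊤ D.Lambda

/-- The relative elementary subgroup `EU(2n, I, Γ)`: the normal closure of
`FU(2n, I, Γ)` in `EU(2n, A, Λ)`. -/
def EU (D : FormRingData A) (n : ℕ) (I Γ : AddSubgroup A) : Subgroup (GLn A n) :=
  Subgroup.closure {x | ∃ g ∈ D.EUmax n, ∃ t ∈ D.transvGen n I Γ, x = g * t * g⁻¹}

/-- The additive subgroup generated by products `st`, `s ∈ S`, `t ∈ T`. -/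
def mulSub (S T : AddSubgroup A) : AddSubgroup A :=
  AddSubgroup.closure {x | ∃ a ∈ S, ∃ b ∈ T, x = a * b}

/-- The symmetrised product `ST + TS` of two (additive subgroups underlying)
two-sided ideals. -/
def symI (S T : AddSubgroup A) : AddSubgroup A :=
  mulSub S T ⊔ mulSub T S

/-- The minimal relative form parameter `Γ_min(K)` of level `K`. -/
def gammaMin (D : FormRingData A) (K : AddSubgroup A) : AddSubgroup A :=
  AddSubgroup.closure
    ({x | ∃ a ∈ K, x = a - D.lam * D.bar a} ∪
      {x | ∃ a ∈ K, ∃ c ∈ D.Lambda, x = a * c * D.bar a})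

/-- The relative form parameter `ˢΓ = ⟨ b γ b̄ ∣ b ∈ S, γ ∈ Γ ⟩`. -/
def conjPar (D : FormRingData A) (S Γ : AddSubgroup A) : AddSubgroup A :=
  AddSubgroup.closure {x | ∃ b ∈ S, ∃ g ∈ Γ, x = b * g * D.bar b}

/-- The relative form parameter of the symmetrised product
`(I,Γ)∘(J,Δ) = (IJ+JI, Γ_min(IJ+JI) + ᴶΓ + ᴵΔ)`. -/
def symG (D : FormRingData A) (I Γ J Δ : AddSubgroup A) : AddSubgroup A :=
  D.gammaMin (symI I J) ⊔ D.conjPar J Γ ⊔ D.conjPar I Δ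

/-- The elementary subgroup `EU(2n, (I,Γ)∘(J,Δ))` of the symmetrised product. -/
def EUsym (D : FormRingData A) (n : ℕ) (I Γ J Δ : AddSubgroup A) : Subgroup (GLn A n) :=
  D.EU n (symI I J) (D.symG I Γ J Δ)

/-- Position-dependent membership `a ∈ (I,Γ)` at position `(i,j)`:
`a ∈ I` for a short root position, `a ∈ λ^{−(ε(i)+1)/2}Γ` for a long one. -/
def pmem (D : FormRingData A) (I Γ : AddSubgroup A) {n : ℕ} (i j : Idx n) (a : A) : Prop :=
  if j = Idx.neg i then ∃ g ∈ Γ, a = D.lpow (-(Idx.eps i + 1) / 2) * g else a ∈ I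

end FormRingData

/-- A form ideal `(I,Γ)` of the form ring `(A,Λ)`. -/
structure FormIdeal {A : Type*} [Ring A] (D : FormRingData A) where
  I : AddSubgroup A
  Gamma : AddSubgroup A
  mul_mem_left : ∀ (c : A), ∀ x ∈ I, c * x ∈ I
  mul_mem_right : ∀ (c : A), ∀ x ∈ I, x * c ∈ I
  bar_mem : ∀ x ∈ I, D.bar x ∈ I
  gammaMin_le : D.gammaMin I ≤ Gamma
  gamma_le_I : Gamma ≤ I
  gamma_le_Lambda : Gamma ≤ D.Lambda
  gamma_conj : ∀ (c : A), ∀ x ∈ Gamma, c * x * D.bar c ∈ Gamma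

/-!
For indices `i`, `j` of any sign let `z` be the conjugate of `T_{j,−j}(b)` by `T_{−j,j}(r)`, and
choose an index `k ≠ ±i, ±j` of the same sign as `i`. The Chevalley commutator formula
`[T_ik(1), T_{k,−k}(a)] = T_{i,−k}(a) T_{i,−i}(a)` rewrites the long root element `T_{i,−i}(a)` in
terms of `T_{i,−k}(a)`, `T_{k,−k}(a)` and the conjugate of the latter by `T_ik(1)`. The elements of
`FU(2n,I,Γ)` whose commutator with `z` lies in `[FU(2n,I,Γ), FU(2n,J,Δ)]` form a subgroup, and it
contains all three factors: `T_{k,−k}(a)` commutes with `z`, while for the other two one uses that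
the unipotent radical of the parabolic subgroup of an index `±k` is normalised by `T_{−j,j}(r)`,
so that commutators of its elements with `z` are as well controlled as those with `T_{j,−j}(b)`.
The level `(I,Γ)∘(J,Δ)` appearing there is harmless because
`FU(2n,(I,Γ)∘(J,Δ)) ≤ [FU(2n,I,Γ), FU(2n,J,Δ)]`.
-/

namespace Idx

variable {n : ℕ}

theorem neg_inj {i j : Idx n} : neg i = neg j ↔ i = j :=
  neg_injective.eq_iff

theorem neg_eq_iff_eq_neg {i j : Idx n} : neg i = j ↔ i = neg j := by
  rw [← neg_inj, neg_neg]

theorem eps_neg (i : Idx n) : eps (neg i) = -eps i := by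
  cases h : i.2 <;> simp [eps, neg, h]

theorem eps_eq_one_or_eq_neg_one (i : Idx n) : eps i = 1 ∨ eps i = -1 := by
  cases h : i.2 <;> simp [eps, h]

theorem ne_of_fst_ne {i j : Idx n} (h : i.1 ≠ j.1) : i ≠ j :=
  fun e => h (congrArg Prod.fst e)

theorem ne_and_ne_neg_of_fst_ne {i j : Idx n} (h : i.1 ≠ j.1) :
    i ≠ j ∧ i ≠ neg j ∧ j ≠ i ∧ j ≠ neg i :=
  ⟨ne_of_fst_ne h, ne_of_fst_ne h, ne_of_fst_ne h.symm, ne_of_fst_ne h.symm⟩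

theorem eq_or_eq_neg_of_fst_eq {i j : Idx n} (h : i.1 = j.1) : i = j ∨ i = neg j := by
  rcases Bool.eq_or_eq_not i.2 j.2 with h' | h'
  · exact Or.inl (Prod.ext h h')
  · exact Or.inr (Prod.ext h h')

end Idx

namespace FormRingData

section Scalars

variable {A : Type*} [Ring A] (D : FormRingData A)

theorem bar_one : D.bar 1 = 1 := by
  simpa [D.bar_bar] using (D.bar_mul 1 (D.bar 1)).symm

theorem bar_pow (a : A) (m : ℕ) : D.bar (a ^ m) = D.bar a ^ m := by
  induction m with
  | zero => simp [bar_one]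
  | succ m ih => rw [pow_succ, D.bar_mul, ih, pow_succ']

/-- The symmetry `λ` as a unit, so that its integral powers obey the usual laws. -/
def lamUnit : Aˣ where
  val := D.lam
  inv := D.bar D.lam
  val_inv := D.lam_bar
  inv_val := by rw [← D.lam_comm, D.lam_bar]

theorem lpow_natCast (m : ℕ) : D.lpow m = D.lam ^ m := by
  simp [lpow]

theorem lpow_neg_natCast (m : ℕ) : D.lpow (-m) = D.bar D.lam ^ m := by
  rcases m.eq_zero_or_pos with rfl | hm
  · simp [lpow]
  · rw [lpow, if_neg (by omega), Int.neg_neg, Int.toNat_natCast]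

theorem lpow_eq_zpow (k : ℤ) : D.lpow k = ↑(D.lamUnit ^ k) := by
  obtain ⟨m, rfl | rfl⟩ := k.eq_nat_or_neg
  · simp [lpow_natCast, lamUnit]
  · rw [lpow_neg_natCast, _root_.zpow_neg, zpow_natCast, ← inv_pow, Units.val_pow_eq_pow_val]
    rfl

theorem lpow_zero : D.lpow 0 = 1 := by
  simp [lpow]

theorem lpow_one : D.lpow 1 = D.lam := by
  simp [lpow]

theorem lpow_add (k l : ℤ) : D.lpow (k + l) = D.lpow k * D.lpow l := by
  simp only [lpow_eq_zpow, _root_.zpow_add, Units.val_mul]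

theorem commute_lpow (a : A) (k : ℤ) : Commute a (D.lpow k) := by
  rw [lpow_eq_zpow]
  exact Commute.units_zpow_right (u := D.lamUnit) (D.lam_comm a).symm k

theorem bar_lpow (k : ℤ) : D.bar (D.lpow k) = D.lpow (-k) := by
  obtain ⟨m, rfl | rfl⟩ := k.eq_nat_or_neg
  · rw [lpow_natCast, lpow_neg_natCast, bar_pow]
  · rw [_root_.neg_neg, lpow_natCast, lpow_neg_natCast, bar_pow, D.bar_bar]

theorem bar_eq_of_mem_Lambda {g : A} (hg : g ∈ D.Lambda) : D.bar g = -(D.lpow (-1) * g) := by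
  have h : g = -(D.lpow 1 * D.bar g) := by rw [lpow_one, ← D.lambdaMax_mem g hg]
  nth_rw 2 [h]
  rw [mul_neg, _root_.neg_neg, ← mul_assoc, ← lpow_add, neg_add_cancel, lpow_zero, one_mul]

end Scalars

section Twist

variable {A : Type*} [Ring A] (D : FormRingData A) {n : ℕ}

/-- The map `c ↦ λ^{(ε(j)−ε(i))/2} c̄`; the entry of `T_ij(c)` at `(−j,−i)` is minus its value. -/
def twist (i j : Idx n) : A →+ A :=
  (AddMonoidHom.mulLeft (D.lpow ((Idx.eps j - Idx.eps i) / 2))).comp D.bar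

theorem twist_apply (i j : Idx n) (c : A) :
    D.twist i j c = D.lpow ((Idx.eps j - Idx.eps i) / 2) * D.bar c := rfl

theorem twist_of_snd_eq {i j : Idx n} (h : i.2 = j.2) (c : A) : D.twist i j c = D.bar c := by
  simp [twist_apply, Idx.eps, h, lpow_zero]

theorem twist_mul (i j k : Idx n) (a b : A) :
    D.twist i k (a * b) = D.twist j k b * D.twist i j a := by
  have exponent : (Idx.eps k - Idx.eps i) / 2
      = (Idx.eps k - Idx.eps j) / 2 + (Idx.eps j - Idx.eps i) / 2 := by
    rcases i.eps_eq_one_or_eq_neg_one with hi | hi <;>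
    rcases j.eps_eq_one_or_eq_neg_one with hj | hj <;>
    rcases k.eps_eq_one_or_eq_neg_one with hk | hk <;> simp [hi, hj, hk]
  simp only [twist_apply, exponent, lpow_add, D.bar_mul, mul_assoc,
    (D.commute_lpow (D.bar b) _).left_comm]

theorem twist_twist (i j : Idx n) (c : A) :
    D.twist (Idx.neg j) (Idx.neg i) (D.twist i j c) = c := by
  have exponent : (Idx.eps (Idx.neg i) - Idx.eps (Idx.neg j)) / 2
      = (Idx.eps j - Idx.eps i) / 2 := by
    rw [Idx.eps_neg, Idx.eps_neg, neg_sub_neg]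
  rw [twist_apply, twist_apply, exponent, D.bar_mul, D.bar_bar, bar_lpow,
    (D.commute_lpow c _).eq, ← mul_assoc, ← lpow_add, add_neg_cancel, lpow_zero, one_mul]

/-- The parameters `λ^{−(ε(i)+1)/2} Γ` allowed at the long root position `(i,−i)`. -/
def longLevel (Γ : AddSubgroup A) (i : Idx n) : AddSubgroup A :=
  Γ.map (AddMonoidHom.mulLeft (D.lpow (-(Idx.eps i + 1) / 2)))

variable {D}

theorem mem_longLevel {Γ : AddSubgroup A} {i : Idx n} {z : A} :
    z ∈ D.longLevel Γ i ↔ ∃ g ∈ Γ, D.lpow (-(Idx.eps i + 1) / 2) * g = z :=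
  Iff.rfl

theorem longLevel_mono {Γ Δ : AddSubgroup A} (h : Γ ≤ Δ) (i : Idx n) :
    D.longLevel Γ i ≤ D.longLevel Δ i :=
  AddSubgroup.map_mono h

theorem longLevel_congr (Γ : AddSubgroup A) {i j : Idx n} (h : i.2 = j.2) :
    D.longLevel Γ i = D.longLevel Γ j := by
  simp only [longLevel, Idx.eps, h]

theorem longLevel_neg_of_snd_eq_true (Γ : AddSubgroup A) {i : Idx n} (h : i.2 = true) :
    D.longLevel Γ (Idx.neg i) = Γ := by
  ext z
  simp [mem_longLevel, Idx.eps, Idx.neg, h, lpow_zero]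

theorem twist_of_mem_longLevel {i : Idx n} {z : A} (hz : z ∈ D.longLevel D.Lambda i) :
    D.twist i (Idx.neg i) z = -z := by
  obtain ⟨g, hg, rfl⟩ := mem_longLevel.1 hz
  have exponent : (Idx.eps (Idx.neg i) - Idx.eps i) / 2 + -1 + -(-(Idx.eps i + 1) / 2)
      = -(Idx.eps i + 1) / 2 := by
    rw [Idx.eps_neg]
    rcases i.eps_eq_one_or_eq_neg_one with hi | hi <;> simp [hi]
  rw [twist_apply, D.bar_mul, bar_lpow, bar_eq_of_mem_Lambda D hg, neg_mul, mul_neg, mul_assoc,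
    (D.commute_lpow g _).eq, ← mul_assoc, ← mul_assoc, ← lpow_add, ← lpow_add, exponent]

theorem mul_mul_twist_mem_longLevel {Γ Δ : AddSubgroup A} {a z : A} (i : Idx n) {j : Idx n}
    (hz : z ∈ D.longLevel Γ j) (ha : ∀ g ∈ Γ, a * g * D.bar a ∈ Δ) :
    a * z * D.twist i j a ∈ D.longLevel Δ i := by
  obtain ⟨g, hg, rfl⟩ := mem_longLevel.1 hz
  have exponent : -(Idx.eps i + 1) / 2
      = -(Idx.eps j + 1) / 2 + (Idx.eps j - Idx.eps i) / 2 := by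
    rcases i.eps_eq_one_or_eq_neg_one with hi | hi <;>
    rcases j.eps_eq_one_or_eq_neg_one with hj | hj <;> simp [hi, hj]
  refine mem_longLevel.2 ⟨_, ha g hg, ?_⟩
  rw [twist_apply, exponent, lpow_add]
  simp only [mul_assoc, (D.commute_lpow a _).left_comm, (D.commute_lpow g _).left_comm]

theorem lpow_mul_sub_lam_mul_bar (i : Idx n) (x : A) :
    D.lpow (-(Idx.eps i + 1) / 2) * (x - D.lam * D.bar x) =
      D.lpow (-(Idx.eps i + 1) / 2) * x -
        D.twist i (Idx.neg i) (D.lpow (-(Idx.eps i + 1) / 2) * x) := by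
  have exponent : (Idx.eps (Idx.neg i) - Idx.eps i) / 2 + -(-(Idx.eps i + 1) / 2)
      = -(Idx.eps i + 1) / 2 + 1 := by
    rw [Idx.eps_neg]
    rcases i.eps_eq_one_or_eq_neg_one with hi | hi <;> simp [hi]
  rw [twist_apply, D.bar_mul, bar_lpow, (D.commute_lpow (D.bar x) _).eq, ← mul_assoc, ← lpow_add,
    exponent, lpow_add, lpow_one, mul_assoc, mul_sub]

theorem mul_mul_bar_mem_of_mem_closure {s : Set A} {M : AddSubgroup A} {c x : A}
    (hc : c ∈ D.Lambda) (diagonal : ∀ x ∈ s, x * c * D.bar x ∈ M)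
    (cross : ∀ x ∈ AddSubgroup.closure s, ∀ y ∈ AddSubgroup.closure s,
      x * c * D.bar y - D.lam * D.bar (x * c * D.bar y) ∈ M)
    (hx : x ∈ AddSubgroup.closure s) : x * c * D.bar x ∈ M := by
  induction hx using AddSubgroup.closure_induction with
  | mem x hx => exact diagonal x hx
  | zero => simp
  | neg x _ hx => simpa using hx
  | add x y hx hy ihx ihy =>
    have transpose : y * c * D.bar x = -(D.lam * D.bar (x * c * D.bar y)) := by
      rw [D.bar_mul, D.bar_mul, D.bar_bar]
      nth_rw 1 [D.lambdaMax_mem c hc]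
      rw [mul_neg, neg_mul, ← mul_assoc y, ← D.lam_comm y]
      simp only [mul_assoc]
    have expand : (x + y) * c * D.bar (x + y) = x * c * D.bar x + y * c * D.bar y +
        (x * c * D.bar y - D.lam * D.bar (x * c * D.bar y)) := by
      rw [sub_eq_add_neg, ← transpose, map_add]
      noncomm_ring
    rw [expand]
    exact add_mem (add_mem ihx ihy) (cross x hx y hy)

end Twist

section Transvections

variable {A : Type*} [Ring A] (D : FormRingData A) {n : ℕ}

theorem single_mul_single_eq_ite (i j k l : Idx n) (a b : A) :
    single i j a * single k l b = if j = k then single i l (a * b) else 0 := by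
  split_ifs with h
  · rw [h, single_mul_single_same]
  · exact single_mul_single_of_ne _ _ _ _ h _

theorem TS_val {i j : Idx n} (h : i ≠ j) (c : A) :
    (D.TS i j c : Matrix (Idx n) (Idx n) A) =
      1 + (single i j c - single (Idx.neg j) (Idx.neg i) (D.twist i j c)) := by
  rw [TS, dif_neg h]
  rfl

theorem TL_val (i : Idx n) (c : A) :
    (D.TL i c : Matrix (Idx n) (Idx n) A) = 1 + single i (Idx.neg i) c := rfl

theorem TS_inv {i j : Idx n} (h : i ≠ j) (c : A) : (D.TS i j c)⁻¹ = D.TS i j (-c) := by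
  apply Units.ext
  rw [TS, TS, dif_neg h, dif_neg h]
  rfl

theorem TL_inv (i : Idx n) (c : A) : (D.TL i c)⁻¹ = D.TL i (-c) :=
  Units.ext rfl

theorem TS_zero {i j : Idx n} (h : i ≠ j) : D.TS i j 0 = 1 := by
  apply Units.ext
  simp [TS_val D h]

theorem TL_zero (i : Idx n) : D.TL i 0 = 1 := by
  apply Units.ext
  simp [TL_val]

theorem TS_add {i j : Idx n} (h : i ≠ j) (c d : A) :
    D.TS i j (c + d) = D.TS i j c * D.TS i j d := by
  apply Units.ext
  simp only [Units.val_mul, TS_val D h, map_add, mul_add, add_mul, mul_sub, sub_mul, mul_one,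
    one_mul, single_mul_single_eq_ite, h.symm, Idx.neg_inj, h, (Idx.neg_ne _).symm, Idx.neg_ne,
    if_false, sub_zero, add_zero, single_add]
  abel

theorem TL_add (i : Idx n) (c d : A) : D.TL i (c + d) = D.TL i c * D.TL i d := by
  apply Units.ext
  simp only [Units.val_mul, TL_val, mul_add, add_mul, mul_one, one_mul, single_mul_single_eq_ite,
    Idx.neg_ne, if_false, add_zero, single_add]
  abel

theorem TS_eq_TS_neg_neg {i j : Idx n} (h : i ≠ j) (c : A) :
    D.TS i j c = D.TS (Idx.neg j) (Idx.neg i) (-D.twist i j c) := by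
  apply Units.ext
  rw [TS_val D h, TS_val D (mt Idx.neg_inj.1 h.symm), map_neg, twist_twist, Idx.neg_neg,
    Idx.neg_neg, ← single_neg, ← single_neg]
  abel

theorem commute_TS_TS {i j k l : Idx n} (a b : A) (hij : i ≠ j) (hkl : k ≠ l) (hjk : j ≠ k)
    (hli : l ≠ i) (hjl : j ≠ Idx.neg l) (hik : i ≠ Idx.neg k) :
    Commute (D.TS i j a) (D.TS k l b) := by
  have hlj : l ≠ Idx.neg j := fun e => hjl (Idx.neg_eq_iff_eq_neg.1 e.symm)
  have hki : k ≠ Idx.neg i := fun e => hik (Idx.neg_eq_iff_eq_neg.1 e.symm)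
  apply Units.ext
  simp only [Units.val_mul, TS_val D hij, TS_val D hkl, mul_add, add_mul, mul_sub, sub_mul,
    mul_one, one_mul, single_mul_single_eq_ite, Idx.neg_eq_iff_eq_neg, Idx.neg_neg, hjk,
    hjk.symm, hli, hli.symm, hjl, hlj, hik, hki, if_false, sub_zero, add_zero]
  abel

theorem commute_TS_TL {i j k : Idx n} (a b : A) (hij : i ≠ j) (hjk : j ≠ k)
    (hik : i ≠ Idx.neg k) : Commute (D.TS i j a) (D.TL k b) := by
  apply Units.ext
  simp only [Units.val_mul, TS_val D hij, TL_val, mul_add, add_mul, mul_sub, sub_mul, mul_one,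
    one_mul, single_mul_single_eq_ite, hjk, hjk.symm, hik, hik.symm, Idx.neg_neg,
    Idx.neg_eq_iff_eq_neg, if_false, sub_zero, add_zero]
  abel

theorem commute_TL_TL {i k : Idx n} (a b : A) (hik : i ≠ Idx.neg k) :
    Commute (D.TL i a) (D.TL k b) := by
  apply Units.ext
  simp only [Units.val_mul, TL_val, mul_add, add_mul, mul_one, one_mul, single_mul_single_eq_ite,
    Idx.neg_eq_iff_eq_neg, hik, hik.symm, if_false, add_zero]
  abel

theorem commutator_TS_TS {i j k : Idx n} (a b : A) (hij : i.1 ≠ j.1) (hjk : j.1 ≠ k.1)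
    (hik : i.1 ≠ k.1) : ⁅D.TS i j a, D.TS j k b⁆ = D.TS i k (a * b) := by
  obtain ⟨hij, hij', -, hji'⟩ := Idx.ne_and_ne_neg_of_fst_ne hij
  obtain ⟨hjk, hjk', hkj, hkj'⟩ := Idx.ne_and_ne_neg_of_fst_ne hjk
  obtain ⟨hik, -, hki, -⟩ := Idx.ne_and_ne_neg_of_fst_ne hik
  rw [commutatorElement_def, mul_inv_eq_iff_eq_mul, mul_inv_eq_iff_eq_mul]
  apply Units.ext
  simp only [Units.val_mul, TS_val D hij, TS_val D hjk, TS_val D hik, mul_add, add_mul,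
    mul_sub, sub_mul, mul_one, one_mul, single_mul_single_eq_ite, Idx.neg_neg,
    Idx.neg_eq_iff_eq_neg, (Idx.neg_ne _).symm, hij, hij', hji', hjk', hkj, hkj', hik, hki,
    if_false, if_true, sub_zero, add_zero, D.twist_mul i j k]
  abel

theorem commutator_TS_TS_neg {i j : Idx n} (a b : A) (hij : i.1 ≠ j.1) :
    ⁅D.TS i j a, D.TS j (Idx.neg i) b⁆ =
      D.TL i (a * b - D.twist i (Idx.neg i) (a * b)) := by
  obtain ⟨hij, hij', hji, hji'⟩ := Idx.ne_and_ne_neg_of_fst_ne hij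
  have single_sub (s t : A) :
      single i (Idx.neg i) (s - t) = single i (Idx.neg i) s - single i (Idx.neg i) t :=
    map_sub (singleAddMonoidHom i (Idx.neg i)) s t
  rw [commutatorElement_def, mul_inv_eq_iff_eq_mul, mul_inv_eq_iff_eq_mul]
  apply Units.ext
  simp only [Units.val_mul, TS_val D hij, TS_val D hji', TL_val, mul_add, add_mul, mul_sub,
    sub_mul, mul_one, one_mul, Idx.neg_neg, single_mul_single_eq_ite,
    Idx.neg_eq_iff_eq_neg, (Idx.neg_ne _).symm, hij, hij', hji, hji', if_false, if_true, sub_zero,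
    add_zero, D.twist_mul i j (Idx.neg i), single_sub]
  abel

theorem commutator_TS_TL {i j : Idx n} (a : A) {b : A} (hij : i.1 ≠ j.1)
    (hb : D.twist j (Idx.neg j) b = -b) :
    ⁅D.TS i j a, D.TL j b⁆ = D.TS i (Idx.neg j) (a * b) * D.TL i (a * b * D.twist i j a) := by
  obtain ⟨hij, hij', -, hji'⟩ := Idx.ne_and_ne_neg_of_fst_ne hij
  rw [commutatorElement_def, mul_inv_eq_iff_eq_mul, mul_inv_eq_iff_eq_mul]
  apply Units.ext
  simp only [Units.val_mul, TS_val D hij, TS_val D hij', TL_val, mul_add, add_mul, mul_sub,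
    sub_mul, mul_one, one_mul, Idx.neg_neg, single_mul_single_eq_ite, Idx.neg_eq_iff_eq_neg,
    (Idx.neg_ne _).symm, hij, hij', hji', if_false, if_true, sub_zero, add_zero,
    D.twist_mul i j (Idx.neg j), hb, neg_mul, ← single_neg, mul_assoc]
  abel

end Transvections

section Levels

variable {A : Type*} [Ring A] {D : FormRingData A}

theorem symI_le_iff {S T M : AddSubgroup A} :
    symI S T ≤ M ↔ (∀ a ∈ S, ∀ b ∈ T, a * b ∈ M) ∧ ∀ b ∈ T, ∀ a ∈ S, b * a ∈ M := by
  rw [symI, mulSub, mulSub, sup_le_iff, AddSubgroup.closure_le, AddSubgroup.closure_le]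
  refine ⟨fun h => ⟨fun a ha b hb => h.1 ⟨a, ha, b, hb, rfl⟩,
    fun b hb a ha => h.2 ⟨b, hb, a, ha, rfl⟩⟩, fun h => ⟨?_, ?_⟩⟩
  · rintro _ ⟨a, ha, b, hb, rfl⟩
    exact h.1 a ha b hb
  · rintro _ ⟨b, hb, a, ha, rfl⟩
    exact h.2 b hb a ha

theorem mul_mem_symI {S T : AddSubgroup A} {a b : A} (ha : a ∈ S) (hb : b ∈ T) :
    a * b ∈ symI S T :=
  (symI_le_iff.1 le_rfl).1 a ha b hb

theorem mul_mem_symI' {S T : AddSubgroup A} {a b : A} (ha : a ∈ S) (hb : b ∈ T) :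
    b * a ∈ symI S T :=
  (symI_le_iff.1 le_rfl).2 b hb a ha

theorem gammaMin_le_iff {K M : AddSubgroup A} :
    D.gammaMin K ≤ M ↔ (∀ a ∈ K, a - D.lam * D.bar a ∈ M) ∧
      ∀ a ∈ K, ∀ c ∈ D.Lambda, a * c * D.bar a ∈ M := by
  rw [gammaMin, AddSubgroup.closure_le, Set.union_subset_iff]
  refine ⟨fun h => ⟨fun a ha => h.1 ⟨a, ha, rfl⟩, fun a ha c hc => h.2 ⟨a, ha, c, hc, rfl⟩⟩,
    fun h => ⟨?_, ?_⟩⟩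
  · rintro _ ⟨a, ha, rfl⟩
    exact h.1 a ha
  · rintro _ ⟨a, ha, c, hc, rfl⟩
    exact h.2 a ha c hc

theorem sub_mem_gammaMin {K : AddSubgroup A} {a : A} (ha : a ∈ K) :
    a - D.lam * D.bar a ∈ D.gammaMin K :=
  (gammaMin_le_iff.1 le_rfl).1 a ha

theorem conj_mem_gammaMin {K : AddSubgroup A} {a c : A} (ha : a ∈ K) (hc : c ∈ D.Lambda) :
    a * c * D.bar a ∈ D.gammaMin K :=
  (gammaMin_le_iff.1 le_rfl).2 a ha c hc

theorem conjPar_le_iff {S Γ M : AddSubgroup A} :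
    D.conjPar S Γ ≤ M ↔ ∀ b ∈ S, ∀ g ∈ Γ, b * g * D.bar b ∈ M := by
  rw [conjPar, AddSubgroup.closure_le]
  refine ⟨fun h b hb g hg => h ⟨b, hb, g, hg, rfl⟩, fun h => ?_⟩
  rintro _ ⟨b, hb, g, hg, rfl⟩
  exact h b hb g hg

theorem conj_mem_conjPar {S Γ : AddSubgroup A} {b g : A} (hb : b ∈ S) (hg : g ∈ Γ) :
    b * g * D.bar b ∈ D.conjPar S Γ :=
  conjPar_le_iff.1 le_rfl b hb g hg

theorem symG_le_iff {I Γ J Δ M : AddSubgroup A} :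
    D.symG I Γ J Δ ≤ M ↔
      D.gammaMin (symI I J) ≤ M ∧ D.conjPar J Γ ≤ M ∧ D.conjPar I Δ ≤ M := by
  simp only [symG, sup_le_iff, and_assoc]

end Levels

end FormRingData

namespace FormIdeal

open FormRingData

variable {A : Type*} [Ring A] {D : FormRingData A} (P Q R : FormIdeal D) {n : ℕ}

theorem mem_I_of_mem_longLevel {i : Idx n} {z : A} (hz : z ∈ D.longLevel P.Gamma i) :
    z ∈ P.I := by
  obtain ⟨g, hg, rfl⟩ := mem_longLevel.1 hz
  exact P.mul_mem_left _ _ (P.gamma_le_I hg)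

theorem twist_mem (i j : Idx n) {c : A} (hc : c ∈ P.I) : D.twist i j c ∈ P.I :=
  P.mul_mem_left _ _ (P.bar_mem c hc)

theorem sub_twist_mem_longLevel (i : Idx n) {c : A} (hc : c ∈ P.I) :
    c - D.twist i (Idx.neg i) c ∈ D.longLevel P.Gamma i := by
  set p := -(Idx.eps i + 1) / 2 with hp
  have hcp : D.lpow p * (D.lpow (-p) * c) = c := by
    rw [← mul_assoc, ← lpow_add, add_neg_cancel, lpow_zero, one_mul]
  refine mem_longLevel.2
    ⟨_, P.gammaMin_le (sub_mem_gammaMin (P.mul_mem_left (D.lpow (-p)) c hc)), ?_⟩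
  rw [lpow_mul_sub_lam_mul_bar, ← hp, hcp]

variable (D) in
/-- The form ring `(A,Λ)` as a form ideal of itself. -/
def top : FormIdeal D where
  I := ⊤
  Gamma := D.Lambda
  mul_mem_left _ _ _ := AddSubgroup.mem_top _
  mul_mem_right _ _ _ := AddSubgroup.mem_top _
  bar_mem _ _ := AddSubgroup.mem_top _
  gammaMin_le := gammaMin_le_iff.2 ⟨fun a _ => D.lambdaMin_mem a, fun a _ => D.lambda_conj a⟩
  gamma_le_I := le_top
  gamma_le_Lambda := le_rfl
  gamma_conj := D.lambda_conj

theorem mul_mem_symI_left (c : A) {x : A} (hx : x ∈ symI P.I Q.I) : c * x ∈ symI P.I Q.I := by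
  have h : symI P.I Q.I ≤ (symI P.I Q.I).comap (AddMonoidHom.mulLeft c) := symI_le_iff.2
    ⟨fun a ha b hb => by
      simpa [mul_assoc] using mul_mem_symI (P.mul_mem_left c a ha) hb,
    fun b hb a ha => by
      simpa [mul_assoc] using mul_mem_symI' ha (Q.mul_mem_left c b hb)⟩
  exact h hx

theorem mul_mem_symI_right (c : A) {x : A} (hx : x ∈ symI P.I Q.I) : x * c ∈ symI P.I Q.I := by
  have h : symI P.I Q.I ≤ (symI P.I Q.I).comap (AddMonoidHom.mulRight c) := symI_le_iff.2
    ⟨fun a ha b hb => by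
      simpa [mul_assoc] using mul_mem_symI ha (Q.mul_mem_right c b hb),
    fun b hb a ha => by
      simpa [mul_assoc] using mul_mem_symI' (P.mul_mem_right c a ha) hb⟩
  exact h hx

theorem bar_mem_symI {x : A} (hx : x ∈ symI P.I Q.I) : D.bar x ∈ symI P.I Q.I := by
  have h : symI P.I Q.I ≤ (symI P.I Q.I).comap D.bar := symI_le_iff.2
    ⟨fun a ha b hb => by
      simpa [D.bar_mul] using mul_mem_symI' (P.bar_mem a ha) (Q.bar_mem b hb),
    fun b hb a ha => by
      simpa [D.bar_mul] using mul_mem_symI (P.bar_mem a ha) (Q.bar_mem b hb)⟩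
  exact h hx

theorem symG_le_symI : D.symG P.I P.Gamma Q.I Q.Gamma ≤ symI P.I Q.I := by
  refine symG_le_iff.2 ⟨gammaMin_le_iff.2 ⟨fun a ha => ?_, fun a ha c _ => ?_⟩,
    conjPar_le_iff.2 fun b hb g hg => ?_, conjPar_le_iff.2 fun a ha g hg => ?_⟩
  · exact sub_mem ha (mul_mem_symI_left P Q _ (bar_mem_symI P Q ha))
  · exact mul_mem_symI_right P Q _ (mul_mem_symI_right P Q c ha)
  · exact mul_mem_symI_right P Q _ (mul_mem_symI' (P.gamma_le_I hg) hb)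
  · exact mul_mem_symI_right P Q _ (mul_mem_symI ha (Q.gamma_le_I hg))

theorem symG_le_Lambda : D.symG P.I P.Gamma Q.I Q.Gamma ≤ D.Lambda :=
  symG_le_iff.2 ⟨gammaMin_le_iff.2 ⟨fun a _ => D.lambdaMin_mem a, fun a _ => D.lambda_conj a⟩,
    conjPar_le_iff.2 fun b _ g hg => D.lambda_conj b g (P.gamma_le_Lambda hg),
    conjPar_le_iff.2 fun a _ g hg => D.lambda_conj a g (Q.gamma_le_Lambda hg)⟩

theorem conj_mem_symG (c : A) {x : A} (hx : x ∈ D.symG P.I P.Gamma Q.I Q.Gamma) :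
    c * x * D.bar c ∈ D.symG P.I P.Gamma Q.I Q.Gamma := by
  let conj : A →+ A := (AddMonoidHom.mulRight (D.bar c)).comp (AddMonoidHom.mulLeft c)
  have conj_conj (a g : A) : c * (a * g * D.bar a) * D.bar c = c * a * g * D.bar (c * a) := by
    simp only [D.bar_mul, mul_assoc]
  obtain ⟨hmin, hJ, hI⟩ := symG_le_iff.1 (le_refl (D.symG P.I P.Gamma Q.I Q.Gamma))
  have h : D.symG P.I P.Gamma Q.I Q.Gamma ≤ (D.symG P.I P.Gamma Q.I Q.Gamma).comap conj := by
    refine symG_le_iff.2 ⟨gammaMin_le_iff.2 ⟨fun a ha => ?_, fun a ha g hg => ?_⟩,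
      conjPar_le_iff.2 fun b hb g hg => ?_, conjPar_le_iff.2 fun a ha g hg => ?_⟩
    · have conj_sub : c * (a - D.lam * D.bar a) * D.bar c =
          c * a * D.bar c - D.lam * D.bar (c * a * D.bar c) := by
        simp only [D.bar_mul, D.bar_bar, mul_sub, sub_mul, ← mul_assoc, D.lam_comm c]
      refine hmin (conj_sub ▸ sub_mem_gammaMin ?_ :)
      exact mul_mem_symI_right P Q _ (mul_mem_symI_left P Q c ha)
    · exact hmin (conj_conj a g ▸ conj_mem_gammaMin (mul_mem_symI_left P Q c ha) hg :)
    · exact hJ (conj_conj b g ▸ conj_mem_conjPar (Q.mul_mem_left c b hb) hg :)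
    · exact hI (conj_conj a g ▸ conj_mem_conjPar (P.mul_mem_left c a ha) hg :)
  exact h hx

/-- The symmetrised product `(I,Γ)∘(J,Δ)` of two form ideals. -/
def symProd : FormIdeal D where
  I := symI P.I Q.I
  Gamma := D.symG P.I P.Gamma Q.I Q.Gamma
  mul_mem_left c _ := mul_mem_symI_left P Q c
  mul_mem_right c _ := mul_mem_symI_right P Q c
  bar_mem _ := bar_mem_symI P Q
  gammaMin_le := (symG_le_iff.1 le_rfl).1
  gamma_le_I := symG_le_symI P Q
  gamma_le_Lambda := symG_le_Lambda P Q
  gamma_conj c _ := conj_mem_symG P Q c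

/-- The relation `(I,Γ)·(J,Δ) ⊆ (K,Θ)` between form ideals: `IJ ⊆ K` and `ᴵΔ ⊆ Θ`. This is what
`[T_ij(a), T_jk(b)]` and `[T_ij(a), T_{j,−j}(b)]` need in order to have level `(K,Θ)`. -/
structure MulLE : Prop where
  mul_mem : ∀ a ∈ P.I, ∀ b ∈ Q.I, a * b ∈ R.I
  conj_mem : ∀ a ∈ P.I, ∀ g ∈ Q.Gamma, a * g * D.bar a ∈ R.Gamma

theorem mulLE_top_left : MulLE (top D) P P :=
  ⟨fun a _ => P.mul_mem_left a, fun a _ => P.gamma_conj a⟩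

theorem mulLE_top_right : MulLE P (top D) P :=
  ⟨fun a ha b _ => P.mul_mem_right b a ha,
    fun _ ha _ hg => P.gammaMin_le (conj_mem_gammaMin ha hg)⟩

theorem mulLE_symProd : MulLE P Q (symProd P Q) :=
  ⟨fun _ ha _ hb => mul_mem_symI ha hb,
    fun _ ha _ hg => (symG_le_iff.1 le_rfl).2.2 (conj_mem_conjPar ha hg)⟩

end FormIdeal

namespace FormRingData

section Params

variable {A : Type*} [Ring A] (D : FormRingData A) {n : ℕ}

/-- The additive subgroup of all `c` with `T_ij(c) ∈ H`. It reduces the inclusion of an elementary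
subgroup in `H` to additive generators of its level. -/
def shortParams (H : Subgroup (GLn A n)) {i j : Idx n} (h : i ≠ j) : AddSubgroup A where
  carrier := {c | D.TS i j c ∈ H}
  zero_mem' :=
    show D.TS i j 0 ∈ H from TS_zero D h ▸ one_mem H
  add_mem' {c d} (hc : _ ∈ H) (hd : _ ∈ H) :=
    show D.TS i j (c + d) ∈ H from TS_add D h c d ▸ mul_mem hc hd
  neg_mem' {c} (hc : _ ∈ H) :=
    show D.TS i j (-c) ∈ H from TS_inv D h c ▸ inv_mem hc

/-- The additive subgroup of all `z` with `T_{i,−i}(z) ∈ H`, the long root analogue of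
`shortParams`. -/
def longParams (H : Subgroup (GLn A n)) (i : Idx n) : AddSubgroup A where
  carrier := {z | D.TL i z ∈ H}
  zero_mem' :=
    show D.TL i 0 ∈ H from TL_zero D i ▸ one_mem H
  add_mem' {c d} (hc : _ ∈ H) (hd : _ ∈ H) :=
    show D.TL i (c + d) ∈ H from TL_add D i c d ▸ mul_mem hc hd
  neg_mem' {c} (hc : _ ∈ H) :=
    show D.TL i (-c) ∈ H from TL_inv D i c ▸ inv_mem hc

variable {D}

theorem mem_longParams {H : Subgroup (GLn A n)} {i : Idx n} {z : A} :
    z ∈ D.longParams H i ↔ D.TL i z ∈ H :=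
  Iff.rfl

end Params

end FormRingData

namespace FormIdeal

open FormRingData

section ElementarySubgroup

variable {A : Type*} [Ring A] {D : FormRingData A} (P Q : FormIdeal D) {n : ℕ}

/-- The elementary subgroup `FU(2n,I,Γ)` of a form ideal, packaged so that products of form ideals
can be fed to it. -/
abbrev FU (n : ℕ) : Subgroup (GLn A n) :=
  D.FU n P.I P.Gamma

theorem TS_mem_FU {i j : Idx n} (hij : i.1 ≠ j.1) {c : A} (hc : c ∈ P.I) :
    D.TS i j c ∈ P.FU n :=
  Subgroup.subset_closure
    (Or.inl ⟨i, j, Idx.ne_of_fst_ne hij, Idx.ne_of_fst_ne hij, c, hc, rfl⟩)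

theorem TL_mem_FU {i : Idx n} {z : A} (hz : z ∈ D.longLevel P.Gamma i) : D.TL i z ∈ P.FU n := by
  obtain ⟨g, hg, rfl⟩ := mem_longLevel.1 hz
  exact Subgroup.subset_closure (Or.inr ⟨i, g, hg, rfl⟩)

theorem FU_le {H : Subgroup (GLn A n)}
    (short : ∀ i j : Idx n, i.1 ≠ j.1 → ∀ c ∈ P.I, D.TS i j c ∈ H)
    (long : ∀ i : Idx n, ∀ z ∈ D.longLevel P.Gamma i, D.TL i z ∈ H) : P.FU n ≤ H := by
  refine (Subgroup.closure_le H).2 ?_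
  rintro _ (⟨i, j, hij, hij', c, hc, rfl⟩ | ⟨i, g, hg, rfl⟩)
  · exact short i j (fun e => (Idx.eq_or_eq_neg_of_fst_eq e).elim hij hij') c hc
  · exact long i _ (mem_longLevel.2 ⟨g, hg, rfl⟩)

theorem symI_le_shortParams (hn : 3 ≤ n) {i j : Idx n} (hij : i.1 ≠ j.1) :
    symI P.I Q.I ≤ D.shortParams ⁅P.FU n, Q.FU n⁆ (Idx.ne_of_fst_ne hij) := by
  obtain ⟨c, hci, hcj⟩ := Fin.exists_ne_and_ne_of_two_lt i.1 j.1 hn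
  have TS_mul_mem (P Q : FormIdeal D) {a b : A} (ha : a ∈ P.I) (hb : b ∈ Q.I) :
      D.TS i j (a * b) ∈ ⁅P.FU n, Q.FU n⁆ := by
    rw [← commutator_TS_TS (j := (c, true)) D a b hci.symm hcj hij]
    exact Subgroup.commutator_mem_commutator (P.TS_mem_FU hci.symm ha) (Q.TS_mem_FU hcj hb)
  refine symI_le_iff.2 ⟨fun a ha b hb => TS_mul_mem P Q ha hb, fun b hb a ha => ?_⟩
  rw [Subgroup.commutator_comm]
  exact TS_mul_mem Q P hb ha

theorem symI_le_comap_longParams (hn : 3 ≤ n) (i : Idx n) :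
    symI P.I Q.I ≤ (D.longParams ⁅P.FU n, Q.FU n⁆ i).comap
      (AddMonoidHom.id A - D.twist i (Idx.neg i)) := by
  obtain ⟨c, hci, -⟩ := Fin.exists_ne_and_ne_of_two_lt i.1 i.1 hn
  have TL_mul_sub_mem (P Q : FormIdeal D) {a b : A} (ha : a ∈ P.I) (hb : b ∈ Q.I) :
      D.TL i (a * b - D.twist i (Idx.neg i) (a * b)) ∈ ⁅P.FU n, Q.FU n⁆ := by
    rw [← commutator_TS_TS_neg (j := (c, true)) D a b hci.symm]
    exact Subgroup.commutator_mem_commutator (P.TS_mem_FU hci.symm ha) (Q.TS_mem_FU hci hb)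
  refine symI_le_iff.2 ⟨fun a ha b hb => TL_mul_sub_mem P Q ha hb, fun b hb a ha => ?_⟩
  rw [Subgroup.commutator_comm]
  exact TL_mul_sub_mem Q P hb ha

theorem longLevel_conjPar_le_longParams (hn : 3 ≤ n) (i : Idx n) :
    D.longLevel (D.conjPar P.I Q.Gamma) i ≤ D.longParams ⁅P.FU n, Q.FU n⁆ i := by
  refine AddSubgroup.map_le_iff_le_comap.2 (conjPar_le_iff.2 fun w hw g hg => ?_)
  obtain ⟨c, hci, -⟩ := Fin.exists_ne_and_ne_of_two_lt i.1 i.1 hn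
  set j : Idx n := (c, i.2)
  set z := D.lpow (-(Idx.eps i + 1) / 2) * g
  have hz : z ∈ D.longLevel Q.Gamma j :=
    longLevel_congr (i := i) Q.Gamma rfl ▸ mem_longLevel.2 ⟨g, hg, rfl⟩
  have hz' : D.twist j (Idx.neg j) z = -z :=
    twist_of_mem_longLevel (longLevel_mono Q.gamma_le_Lambda j hz)
  have param_eq : D.lpow (-(Idx.eps i + 1) / 2) * (w * g * D.bar w) = w * z * D.twist i j w := by
    rw [twist_of_snd_eq D (i := i) (j := j) rfl]
    simp only [z, mul_assoc, (D.commute_lpow w _).left_comm]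
  have short_mem : D.TS i (Idx.neg j) (w * z) ∈ ⁅P.FU n, Q.FU n⁆ :=
    P.symI_le_shortParams Q hn (i := i) (j := Idx.neg j) hci.symm
      (mul_mem_symI hw (Q.mem_I_of_mem_longLevel hz))
  rw [AddSubgroup.mem_comap, AddMonoidHom.coe_mulLeft, param_eq, mem_longParams,
    ← inv_mul_cancel_left (D.TS i (Idx.neg j) (w * z)) (D.TL i _),
    ← commutator_TS_TL D w hci.symm hz']
  exact mul_mem (inv_mem short_mem)
    (Subgroup.commutator_mem_commutator (P.TS_mem_FU hci.symm hw) (Q.TL_mem_FU hz))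

theorem longLevel_gammaMin_le_longParams (hn : 3 ≤ n) (i : Idx n) :
    D.longLevel (D.gammaMin (symI P.I Q.I)) i ≤ D.longParams ⁅P.FU n, Q.FU n⁆ i := by
  set M := (D.longParams ⁅P.FU n, Q.FU n⁆ i).comap
    (AddMonoidHom.mulLeft (D.lpow (-(Idx.eps i + 1) / 2))) with hM
  have trace_mem {x : A} (hx : x ∈ symI P.I Q.I) : x - D.lam * D.bar x ∈ M := by
    rw [hM, AddSubgroup.mem_comap, AddMonoidHom.coe_mulLeft, lpow_mul_sub_lam_mul_bar]
    exact P.symI_le_comap_longParams Q hn i (mul_mem_symI_left P Q _ hx)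
  have conjPar_le : D.conjPar P.I Q.Gamma ≤ M :=
    AddSubgroup.map_le_iff_le_comap.1 (P.longLevel_conjPar_le_longParams Q hn i)
  have conjPar_le' : D.conjPar Q.I P.Gamma ≤ M := by
    rw [hM, Subgroup.commutator_comm]
    exact AddSubgroup.map_le_iff_le_comap.1 (Q.longLevel_conjPar_le_longParams P hn i)
  have conj_mul (a b c : A) : a * b * c * D.bar (a * b) = a * (b * c * D.bar b) * D.bar a := by
    simp only [D.bar_mul, mul_assoc]
  refine AddSubgroup.map_le_iff_le_comap.2
    (gammaMin_le_iff.2 ⟨fun x hx => trace_mem hx, fun x hx c hc => ?_⟩)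
  rw [symI, mulSub, mulSub, ← AddSubgroup.closure_union] at hx
  refine mul_mul_bar_mem_of_mem_closure hc ?_ (fun x hx y _ => trace_mem ?_) hx
  · rintro _ (⟨a, ha, b, hb, rfl⟩ | ⟨b, hb, a, ha, rfl⟩)
    · exact conj_mul a b c ▸
        conjPar_le (conj_mem_conjPar ha (Q.gammaMin_le (conj_mem_gammaMin hb hc)))
    · exact conj_mul b a c ▸
        conjPar_le' (conj_mem_conjPar hb (P.gammaMin_le (conj_mem_gammaMin ha hc)))
  · rw [AddSubgroup.closure_union] at hx
    exact mul_mem_symI_right P Q _ (mul_mem_symI_right P Q c hx)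

theorem FU_symProd_le_commutator (hn : 3 ≤ n) : (P.symProd Q).FU n ≤ ⁅P.FU n, Q.FU n⁆ := by
  suffices long : ∀ i, D.longLevel (D.symG P.I P.Gamma Q.I Q.Gamma) i ≤
      D.longParams ⁅P.FU n, Q.FU n⁆ i from
    FU_le _ (fun i j hij c hc => P.symI_le_shortParams Q hn hij hc) fun i z hz => long i hz
  intro i
  refine AddSubgroup.map_le_iff_le_comap.2 (symG_le_iff.2 ⟨?_, ?_, ?_⟩) <;>
    refine AddSubgroup.map_le_iff_le_comap.1 ?_
  · exact P.longLevel_gammaMin_le_longParams Q hn i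
  · rw [Subgroup.commutator_comm]
    exact Q.longLevel_conjPar_le_longParams P hn i
  · exact P.longLevel_conjPar_le_longParams Q hn i

end ElementarySubgroup

end FormIdeal

theorem mem_normalizer_closure {G : Type*} [Group G] {s : Set G} {g : G}
    (hg : ∀ y ∈ s, ⁅g, y⁆ ∈ Subgroup.closure s) (hg' : ∀ y ∈ s, ⁅g⁻¹, y⁆ ∈ Subgroup.closure s) :
    g ∈ Subgroup.normalizer (Subgroup.closure s : Set G) := by
  have conj_mem {g : G} (hg : ∀ y ∈ s, ⁅g, y⁆ ∈ Subgroup.closure s) {x : G}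
      (hx : x ∈ Subgroup.closure s) : g * x * g⁻¹ ∈ Subgroup.closure s := by
    have h : Subgroup.closure s ≤ (Subgroup.closure s).comap (MulAut.conj g).toMonoidHom := by
      refine (Subgroup.closure_le _).2 fun y hy => ?_
      simpa [commutatorElement_def] using mul_mem (hg y hy) (Subgroup.subset_closure hy)
    exact h hx
  refine Subgroup.mem_normalizer_iff.2 fun x => ⟨conj_mem hg, fun hx => ?_⟩
  simpa [mul_assoc] using conj_mem hg' hx

namespace FormIdeal

open FormRingData

section UnipotentRadical

variable {A : Type*} [Ring A] {D : FormRingData A} (P Q R : FormIdeal D) {n : ℕ}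

/-- The transvections of level `(I,Γ)` in the row of `k`: the root elements generating
`unipRadical`. -/
def unipGen (k : Idx n) : Set (GLn A n) :=
  {x | ∃ j : Idx n, j.1 ≠ k.1 ∧ ∃ c ∈ P.I, D.TS k j c = x} ∪ D.TL k '' D.longLevel P.Gamma k

/-- The level `(I,Γ)` part of the unipotent radical of the parabolic subgroup fixing the isotropic
line spanned by the basis vector `k`. -/
def unipRadical (k : Idx n) : Subgroup (GLn A n) :=
  Subgroup.closure (P.unipGen k)

variable {P Q R}

theorem TS_mem_unipRadical {k j : Idx n} (hjk : j.1 ≠ k.1) {c : A} (hc : c ∈ P.I) :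
    D.TS k j c ∈ P.unipRadical k :=
  Subgroup.subset_closure (Or.inl ⟨j, hjk, c, hc, rfl⟩)

theorem TS_mem_unipRadical_neg {j k : Idx n} (hjk : j.1 ≠ k.1) {c : A} (hc : c ∈ P.I) :
    D.TS j k c ∈ P.unipRadical (Idx.neg k) := by
  rw [TS_eq_TS_neg_neg D (Idx.ne_of_fst_ne hjk)]
  exact TS_mem_unipRadical (k := Idx.neg k) (j := Idx.neg j) hjk (neg_mem (P.twist_mem j k hc))

theorem TL_mem_unipRadical {k : Idx n} {z : A} (hz : z ∈ D.longLevel P.Gamma k) :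
    D.TL k z ∈ P.unipRadical k :=
  Subgroup.subset_closure (Or.inr ⟨z, hz, rfl⟩)

theorem unipRadical_le_FU (k : Idx n) : P.unipRadical k ≤ P.FU n := by
  refine (Subgroup.closure_le _).2 ?_
  rintro _ (⟨j, hjk, c, hc, rfl⟩ | ⟨z, hz, rfl⟩)
  · exact P.TS_mem_FU hjk.symm hc
  · exact P.TL_mem_FU hz

theorem unipRadical_le_unipRadical_top (k : Idx n) :
    P.unipRadical k ≤ (top D).unipRadical k := by
  refine (Subgroup.closure_le _).2 ?_
  rintro _ (⟨j, hjk, c, -, rfl⟩ | ⟨z, hz, rfl⟩)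
  · exact TS_mem_unipRadical hjk (AddSubgroup.mem_top c)
  · exact TL_mem_unipRadical (longLevel_mono P.gamma_le_Lambda k hz)

theorem inv_mem_unipGen {k : Idx n} {x : GLn A n} (hx : x ∈ P.unipGen k) :
    x⁻¹ ∈ P.unipGen k := by
  rcases hx with ⟨j, hjk, c, hc, rfl⟩ | ⟨z, hz, rfl⟩
  · exact Or.inl ⟨j, hjk, -c, neg_mem hc, (TS_inv D (Idx.ne_of_fst_ne hjk.symm) c).symm⟩
  · exact Or.inr ⟨-z, neg_mem hz, (TL_inv D k z).symm⟩

theorem commutator_mem_unipRadical_of_mem_unipGen {k : Idx n} {x y : GLn A n}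
    (hx : x ∈ (top D).unipGen k) (hy : y ∈ P.unipGen k) : ⁅x, y⁆ ∈ P.unipRadical k := by
  rcases hx with ⟨j, hjk, c, -, rfl⟩ | ⟨z, -, rfl⟩ <;>
    rcases hy with ⟨l, hlk, d, hd, rfl⟩ | ⟨w, -, rfl⟩
  · have hjk' := Idx.ne_of_fst_ne hjk
    have hlk' := Idx.ne_of_fst_ne hlk
    by_cases hjl : j = Idx.neg l
    · subst hjl
      rw [TS_eq_TS_neg_neg D hlk'.symm, commutator_TS_TS_neg D _ _ hjk.symm]
      refine TL_mem_unipRadical (P.sub_twist_mem_longLevel k (P.mul_mem_left c _ ?_))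
      exact neg_mem (P.twist_mem k l hd)
    · rw [(commute_TS_TS D c d hjk'.symm hlk'.symm hjk' hlk' hjl (Idx.neg_ne k).symm).commutator_eq]
      exact one_mem _
  · have hjk' := Idx.ne_of_fst_ne hjk
    rw [(commute_TS_TL D c w hjk'.symm hjk' (Idx.neg_ne k).symm).commutator_eq]
    exact one_mem _
  · have hlk' := Idx.ne_of_fst_ne hlk
    rw [(commute_TS_TL D d z hlk'.symm hlk' (Idx.neg_ne k).symm).symm.commutator_eq]
    exact one_mem _
  · rw [(commute_TL_TL D z w (Idx.neg_ne k).symm).commutator_eq]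
    exact one_mem _

variable (P) in
theorem unipRadical_top_le_normalizer (k : Idx n) :
    (top D).unipRadical k ≤ Subgroup.normalizer (P.unipRadical k : Set (GLn A n)) :=
  (Subgroup.closure_le _).2 fun _ hx => mem_normalizer_closure
    (fun _ => commutator_mem_unipRadical_of_mem_unipGen hx)
    (fun _ => commutator_mem_unipRadical_of_mem_unipGen (inv_mem_unipGen hx))

theorem commutator_TL_mem_unipRadical_of_mem_unipGen (h : MulLE P Q R) {j k : Idx n}
    (hjk : j.1 ≠ k.1) {b : A} (hb : b ∈ D.longLevel Q.Gamma j) {x : GLn A n}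
    (hx : x ∈ P.unipGen k) : ⁅x, D.TL j b⁆ ∈ R.unipRadical k := by
  have hkj' : k ≠ Idx.neg j := Idx.ne_of_fst_ne hjk.symm
  rcases hx with ⟨l, hlk, c, hc, rfl⟩ | ⟨z, -, rfl⟩
  · by_cases hlj : l = j
    · subst hlj
      have hb' := twist_of_mem_longLevel (longLevel_mono Q.gamma_le_Lambda l hb)
      rw [commutator_TS_TL D c hjk.symm hb']
      exact mul_mem
        (TS_mem_unipRadical (j := Idx.neg l) hjk (h.mul_mem c hc b (Q.mem_I_of_mem_longLevel hb)))
        (TL_mem_unipRadical (mul_mul_twist_mem_longLevel k hb (h.conj_mem c hc)))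
    · rw [(commute_TS_TL D c b (Idx.ne_of_fst_ne hlk.symm) hlj hkj').commutator_eq]
      exact one_mem _
  · rw [(commute_TL_TL D z b hkj').commutator_eq]
    exact one_mem _

theorem commutator_TL_mem_unipRadical (h : MulLE P Q R) {j k : Idx n} (hjk : j.1 ≠ k.1) {b : A}
    (hb : b ∈ D.longLevel Q.Gamma j) {x : GLn A n} (hx : x ∈ P.unipRadical k) :
    ⁅x, D.TL j b⁆ ∈ R.unipRadical k := by
  induction hx using Subgroup.closure_induction'' with
  | mem x hx => exact commutator_TL_mem_unipRadical_of_mem_unipGen h hjk hb hx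
  | inv_mem x hx =>
    exact commutator_TL_mem_unipRadical_of_mem_unipGen h hjk hb (inv_mem_unipGen hx)
  | one => simp
  | mul x y hx _ ihx ihy =>
    have normalizes := R.unipRadical_top_le_normalizer k (unipRadical_le_unipRadical_top k hx)
    rw [commutatorElement_mul_left_eq_conj_mul]
    exact mul_mem ((Subgroup.mem_normalizer_iff.1 normalizes _).1 ihy) ihx

variable (P) in
theorem TL_mem_normalizer_unipRadical {k l : Idx n} (hlk : l.1 ≠ k.1) {r : A}
    (hr : r ∈ D.longLevel D.Lambda l) :
    D.TL l r ∈ Subgroup.normalizer (P.unipRadical k : Set (GLn A n)) := by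
  have commutator_mem {r : A} (hr : r ∈ D.longLevel D.Lambda l) (y : GLn A n)
      (hy : y ∈ P.unipGen k) : ⁅D.TL l r, y⁆ ∈ P.unipRadical k := by
    rw [← commutatorElement_inv]
    exact inv_mem (commutator_TL_mem_unipRadical_of_mem_unipGen (mulLE_top_right P) hlk hr hy)
  exact mem_normalizer_closure (commutator_mem hr) (TL_inv D l r ▸ commutator_mem (neg_mem hr))

theorem commutator_conj_TL_mem_unipRadical (h : MulLE P Q R) {j k l : Idx n} (hjk : j.1 ≠ k.1)
    (hlk : l.1 ≠ k.1) {b r : A} (hb : b ∈ D.longLevel Q.Gamma j)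
    (hr : r ∈ D.longLevel D.Lambda l) {x : GLn A n} (hx : x ∈ P.unipRadical k) :
    ⁅x, D.TL l r * D.TL j b * (D.TL l r)⁻¹⁆ ∈ R.unipRadical k := by
  set g := D.TL l r
  have hx' : g⁻¹ * x * g ∈ P.unipRadical k :=
    (Subgroup.mem_normalizer_iff''.1 (P.TL_mem_normalizer_unipRadical hlk hr) x).1 hx
  have conj_eq : ⁅x, g * D.TL j b * g⁻¹⁆ = g * ⁅g⁻¹ * x * g, D.TL j b⁆ * g⁻¹ := by
    rw [conjugate_commutatorElement]
    group
  rw [conj_eq]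
  exact (Subgroup.mem_normalizer_iff.1 (R.TL_mem_normalizer_unipRadical hlk hr) _).1
    (commutator_TL_mem_unipRadical h hjk hb hx')

end UnipotentRadical

end FormIdeal

section RelativeCentralizer

variable {G : Type*} [Group G]

/-- The elements of `F` whose commutator with `x` lies in `[F, K]`. -/
def relCentralizer (F K : Subgroup G) (x : G) : Subgroup G where
  carrier := {f | f ∈ F ∧ ⁅f, x⁆ ∈ ⁅F, K⁆}
  one_mem' := ⟨one_mem F, by simp⟩
  mul_mem' {f f'} := fun ⟨hf, hfx⟩ ⟨hf', hfx'⟩ => by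
    refine ⟨mul_mem hf hf', ?_⟩
    rw [commutatorElement_mul_left_eq_conj_mul]
    have normalizes := Subgroup.normalizer_commutator_ge_left F K hf
    exact mul_mem ((Subgroup.mem_normalizer_iff.1 normalizes _).1 hfx') hfx
  inv_mem' {f} := fun ⟨hf, hfx⟩ => by
    refine ⟨inv_mem hf, ?_⟩
    have normalizes := Subgroup.normalizer_commutator_ge_left F K hf
    have inv_eq : ⁅f⁻¹, x⁆ = f⁻¹ * ⁅f, x⁆⁻¹ * f := by
      simp only [commutatorElement_def]
      group
    exact inv_eq ▸ (Subgroup.mem_normalizer_iff''.1 normalizes _).1 (inv_mem hfx)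

variable {F K : Subgroup G}

theorem mem_relCentralizer {f x : G} : f ∈ relCentralizer F K x ↔ f ∈ F ∧ ⁅f, x⁆ ∈ ⁅F, K⁆ :=
  Iff.rfl

theorem mem_relCentralizer_of_commute {f x : G} (hf : f ∈ F) (h : Commute f x) :
    f ∈ relCentralizer F K x :=
  mem_relCentralizer.2 ⟨hf, h.commutator_eq ▸ one_mem _⟩

theorem conj_mem_relCentralizer {f q x : G} (hf : q * f * q⁻¹ ∈ F) (h : Commute f x)
    (hq : ⁅x, q⁆ ∈ K) : q * f * q⁻¹ ∈ relCentralizer F K x := by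
  have x_eq : x = ⁅x, q⁆ * (q * x * q⁻¹) := by
    rw [commutatorElement_def]
    group
  have commute_conj : Commute (q * f * q⁻¹) (q * x * q⁻¹) := h.conj q
  have commutator_eq : ⁅q * f * q⁻¹, x⁆ = ⁅q * f * q⁻¹, ⁅x, q⁆⁆ := by
    nth_rw 1 [x_eq]
    rw [commutatorElement_mul_right_eq_mul_conj, commute_conj.commutator_eq]
    group
  exact mem_relCentralizer.2
    ⟨hf, commutator_eq ▸ Subgroup.commutator_mem_commutator hf hq⟩

end RelativeCentralizer

section LongRoots

open FormRingData FormIdeal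

variable {A : Type*} [Ring A] {D : FormRingData A} {n : ℕ} {i j k l : Idx n} {a b r : A}

theorem commutator_TS_one_TL (hik : i.1 ≠ k.1) (hik' : i.2 = k.2)
    (ha : a ∈ D.longLevel D.Lambda i) :
    ⁅D.TS i k 1, D.TL k a⁆ = D.TS i (Idx.neg k) a * D.TL i a := by
  rw [longLevel_congr _ hik'] at ha
  rw [commutator_TS_TL D 1 hik (twist_of_mem_longLevel ha), twist_of_snd_eq D hik', bar_one,
    one_mul, mul_one]

theorem commute_TL_conj_TL (hjk : j.1 ≠ k.1) (hlk : l.1 ≠ k.1) :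
    Commute (D.TL k a) (D.TL l r * D.TL j b * (D.TL l r)⁻¹) := by
  have commute_r : Commute (D.TL k a) (D.TL l r) :=
    commute_TL_TL D a r (Idx.ne_of_fst_ne hlk.symm)
  exact (commute_r.mul_right (commute_TL_TL D a b (Idx.ne_of_fst_ne hjk.symm))).mul_right
    commute_r.inv_right

variable {P Q : FormIdeal D}

theorem TS_mem_relCentralizer (hn : 3 ≤ n) (hik : i.1 ≠ k.1) (hjk : j.1 ≠ k.1)
    (hlk : l.1 ≠ k.1) (ha : a ∈ P.I) (hb : b ∈ D.longLevel Q.Gamma j)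
    (hr : r ∈ D.longLevel D.Lambda l) :
    D.TS i k a ∈
      relCentralizer (P.FU n) (Q.FU n) (D.TL l r * D.TL j b * (D.TL l r)⁻¹) := by
  have commutator_mem := commutator_conj_TL_mem_unipRadical (k := Idx.neg k) (mulLE_symProd P Q)
    hjk hlk hb hr (TS_mem_unipRadical_neg hik ha)
  exact mem_relCentralizer.2
    ⟨P.TS_mem_FU hik ha, P.FU_symProd_le_commutator Q hn (unipRadical_le_FU _ commutator_mem)⟩

theorem conj_TS_mem_relCentralizer {F : Subgroup (GLn A n)} {f : GLn A n} (hik : i.1 ≠ k.1)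
    (hjk : j.1 ≠ k.1) (hlk : l.1 ≠ k.1) (hb : b ∈ D.longLevel Q.Gamma j)
    (hr : r ∈ D.longLevel D.Lambda l) (hf : D.TS i k a * f * (D.TS i k a)⁻¹ ∈ F)
    (h : Commute f (D.TL l r * D.TL j b * (D.TL l r)⁻¹)) :
    D.TS i k a * f * (D.TS i k a)⁻¹ ∈
      relCentralizer F (Q.FU n) (D.TL l r * D.TL j b * (D.TL l r)⁻¹) := by
  have commutator_mem := commutator_conj_TL_mem_unipRadical (k := Idx.neg k) (mulLE_top_left Q)
    hjk hlk hb hr (TS_mem_unipRadical_neg hik (AddSubgroup.mem_top a))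
  refine conj_mem_relCentralizer hf h ?_
  rw [← commutatorElement_inv]
  exact inv_mem (unipRadical_le_FU _ commutator_mem)

theorem statement12_general {A : Type*} [Ring A] (D : FormRingData A) (n : ℕ) (hn : 3 ≤ n)
    (P Q : FormIdeal D) (i j : Idx n) {a b r : A} (ha : a ∈ D.longLevel P.Gamma i)
    (hb : b ∈ D.longLevel Q.Gamma j) (hr : r ∈ D.longLevel D.Lambda (Idx.neg j)) :
    ⁅D.TL i a, D.TL (Idx.neg j) r * D.TL j b * D.TL (Idx.neg j) (-r)⁆ ∈
      ⁅D.FU n P.I P.Gamma, D.FU n Q.I Q.Gamma⁆ := by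
  obtain ⟨c, hci, hcj⟩ := Fin.exists_ne_and_ne_of_two_lt i.1 j.1 hn
  set k : Idx n := (c, i.2)
  have hik : i.1 ≠ k.1 := hci.symm
  have hjk : j.1 ≠ k.1 := hcj.symm
  have haI : a ∈ P.I := P.mem_I_of_mem_longLevel ha
  rw [← TL_inv]
  set z := D.TL (Idx.neg j) r * D.TL j b * (D.TL (Idx.neg j) r)⁻¹
  set q := D.TS i k 1
  set x := D.TS i (Idx.neg k) a
  set m := D.TL k a
  have hm : m ∈ P.FU n := P.TL_mem_FU (longLevel_congr (i := i) P.Gamma rfl ▸ ha)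
  have hx : x ∈ P.FU n := P.TS_mem_FU (j := Idx.neg k) hik haI
  have conj_m : q * m * q⁻¹ = x * D.TL i a * m := by
    rw [← commutator_TS_one_TL hik rfl (longLevel_mono P.gamma_le_Lambda i ha)]
    exact (inv_mul_cancel_right _ _).symm
  have commute_m : Commute m z := commute_TL_conj_TL hjk hjk
  have m_mem := mem_relCentralizer_of_commute (K := Q.FU n) hm commute_m
  have x_mem : x ∈ relCentralizer (P.FU n) (Q.FU n) z :=
    TS_mem_relCentralizer (k := Idx.neg k) hn hik hjk hjk haI hb hr
  have conj_m_mem : q * m * q⁻¹ ∈ relCentralizer (P.FU n) (Q.FU n) z :=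
    conj_TS_mem_relCentralizer hik hjk hjk hb hr
      (conj_m ▸ mul_mem (mul_mem hx (P.TL_mem_FU ha)) hm) commute_m
  have TL_eq : D.TL i a = x⁻¹ * (q * m * q⁻¹) * m⁻¹ := by
    rw [conj_m]
    group
  exact TL_eq ▸ (mul_mem (mul_mem (inv_mem x_mem) conj_m_mem) (inv_mem m_mem)).2

end LongRoots

/-- Lemma 9: `[T_{−i,i}(a), Z_{−i,i}(b,r)] ∈ [FU(2n,I,Γ), FU(2n,J,Δ)]` for long
root positions, `1 ≤ i ≤ n`, `a ∈ Γ`, `b ∈ Δ`, `r ∈ Λ`. -/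
theorem statement12 {A : Type*} [Ring A] (D : FormRingData A) (n : ℕ) (hn : 3 ≤ n)
    (FI FJ : FormIdeal D) (i : Idx n) (hi : i.2 = true)
    (a : A) (ha : a ∈ FI.Gamma) (b : A) (hb : b ∈ FJ.Gamma)
    (r : A) (hr : r ∈ D.Lambda) :
    ⁅D.TL (Idx.neg i) a,
        D.TL i (D.lpow (-(Idx.eps i + 1) / 2) * r) * D.TL (Idx.neg i) b *
          D.TL i (-(D.lpow (-(Idx.eps i + 1) / 2) * r))⁆ ∈
      ⁅D.FU n FI.I FI.Gamma, D.FU n FJ.I FJ.Gamma⁆ := by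
  have hr' : D.lpow (-(Idx.eps i + 1) / 2) * r ∈ D.longLevel D.Lambda (Idx.neg (Idx.neg i)) :=
    FormRingData.mem_longLevel.2 ⟨r, hr, by rw [Idx.neg_neg]⟩
  have h := statement12_general D n hn FI FJ (Idx.neg i) (Idx.neg i)
    (FormRingData.longLevel_neg_of_snd_eq_true FI.Gamma hi ▸ ha)
    (FormRingData.longLevel_neg_of_snd_eq_true FJ.Gamma hi ▸ hb) hr'
  rwa [Idx.neg_neg] at h
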